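/- For every α ∈ (0,1), every nonuniform time mesh, and all indices k ≥ 2 and 1 ≤ j ≤ k−1, the L2-1_σ coefficients satisfy c_j^{k+1} − c_j^k < 0. -/

import Mathlib

open MeasureTheory Real Finset

noncomputable section

/-- Time step `τ_j = t_j - t_{j-1}`. -/
def tau (t : ℕ → ℝ) (j : ℕ) : ℝ := t j - t (j - 1)

/-- Step ratio `ρ_j = τ_j / τ_{j-1}`. -/
def rho (t : ℕ → ℝ) (j : ℕ) : ℝ := tau t j / tau t (j - 1)

/-- Offset node `t_k^* = t_{k-1} + σ τ_k` with `σ = 1 - α/2`. -/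
def tstar (α : ℝ) (t : ℕ → ℝ) (k : ℕ) : ℝ := t (k - 1) + (1 - α / 2) * tau t k

/-- L2-1_σ coefficient `a_j^k`. -/
def acoef (α : ℝ) (t : ℕ → ℝ) (j k : ℕ) : ℝ :=
  ∫ θ in (0:ℝ)..1,
    (-2 * tau t j * (1 - θ) - tau t (j + 1)) /
      ((tau t j + tau t (j + 1)) * (tstar α t k - (t (j - 1) + θ * tau t j)) ^ α)

/-- L2-1_σ coefficient `c_j^k`. -/
def ccoef (α : ℝ) (t : ℕ → ℝ) (j k : ℕ) : ℝ :=
  ∫ θ in (0:ℝ)..1,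
    (tau t j ^ 2 * (2 * θ - 1)) /
      (tau t (j + 1) * (tau t j + tau t (j + 1)) *
        (tstar α t k - (t (j - 1) + θ * tau t j)) ^ α)

/-- `d_j^k = c_{j-1}^k - a_j^k`. -/
def dcoef (α : ℝ) (t : ℕ → ℝ) (j k : ℕ) : ℝ := ccoef α t (j - 1) k - acoef α t j k

/-- The lower-triangular L2-1_σ matrix `M` (entries vanish above the diagonal and
for column index `0`). -/
def Mentry (α : ℝ) (t : ℕ → ℝ) (k j : ℕ) : ℝ :=
  if j = 0 ∨ k < j then 0
  else if j = k then ccoef α t (k - 1) k + (1 - α / 2) ^ (1 - α) / ((1 - α) * tau t k ^ α)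
  else if j = 1 then -acoef α t 1 k
  else dcoef α t j k

end

/-!
Substituting `x = t_{j-1} + θ τ_j` turns `c_j^k` into a positive constant times the first moment of
`x ↦ (t_k^* - x)^{-α}` about the midpoint of `[t_{j-1}, t_j]`. Strict convexity of `y ↦ y^{-α}`
makes the difference `(s - x)^{-α} - (s' - x)^{-α}`, for `s < s'`, strictly increasing in `x`, and a
strictly increasing function has positive first moment. Hence the moment decreases as `t_k^*` grows.
-/

section

variable {𝕜 : Type*} [Field 𝕜] [LinearOrder 𝕜] [IsStrictOrderedRing 𝕜]

lemma add_sub_lt_add_sub_of_strictConvexOn {s : Set 𝕜} {f : 𝕜 → 𝕜} (hf : StrictConvexOn 𝕜 s f)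
    {x y d : 𝕜} (hx : x ∈ s) (hyd : y + d ∈ s) (hxy : x < y) (hd : 0 < d) :
    f (x + d) - f x < f (y + d) - f y := by
  have hxyd : x < y + d := by linarith
  have hw : 0 < y + d - x := sub_pos.2 hxyd
  set p := d / (y + d - x) with hp_def
  set q := (y - x) / (y + d - x) with hq_def
  have hp : 0 < p := div_pos hd hw
  have hq : 0 < q := div_pos (sub_pos.2 hxy) hw
  -- The inner points `y` and `x + d` are mirrored convex combinations of the outer ones.
  have hpq : p + q = 1 := by rw [hp_def, hq_def]; field_simp; ring
  have hy : p * x + q * (y + d) = y := by rw [hp_def, hq_def]; field_simp; ring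
  have hxd : q * x + p * (y + d) = x + d := by rw [hp_def, hq_def]; field_simp; ring
  have hfy : f y < p * f x + q * f (y + d) := by
    simpa only [smul_eq_mul, hy] using hf.2 hx hyd hxyd.ne hp hq hpq
  have hfxd : f (x + d) < q * f x + p * f (y + d) := by
    simpa only [smul_eq_mul, hxd] using hf.2 hx hyd hxyd.ne hq hp (add_comm q p ▸ hpq)
  linear_combination hfy + hfxd + (f x + f (y + d)) * hpq

end

lemma strictConvexOn_rpow_of_neg {p : ℝ} (hp : p < 0) :
    StrictConvexOn ℝ (Set.Ioi 0) fun x : ℝ => x ^ p := by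
  refine StrictMonoOn.strictConvexOn_of_deriv (convex_Ioi 0)
    (continuousOn_id.rpow_const fun x hx => Or.inl (ne_of_gt hx)) ?_
  rw [interior_Ioi]
  intro x hx y _ hxy
  rw [Real.deriv_rpow_const, Real.deriv_rpow_const]
  exact mul_lt_mul_of_neg_left (Real.rpow_lt_rpow_of_neg hx hxy (by linarith)) hp

lemma strictConvexOn_inv_rpow {p : ℝ} (hp : 0 < p) :
    StrictConvexOn ℝ (Set.Ioi 0) fun x : ℝ => (x ^ p)⁻¹ :=
  (strictConvexOn_rpow_of_neg (neg_neg_of_pos hp)).congr fun _ hx =>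
    Real.rpow_neg (le_of_lt hx) p

lemma integral_two_mul_sub_add (a b : ℝ) : ∫ x in a..b, (2 * x - (a + b)) = 0 := by
  rw [intervalIntegral.integral_sub (Continuous.intervalIntegrable (by fun_prop) _ _)
    (Continuous.intervalIntegrable (by fun_prop) _ _), intervalIntegral.integral_const_mul,
    integral_id, intervalIntegral.integral_const, smul_eq_mul]
  ring

lemma integral_pos_of_pos_on_Ioo_of_pos_on_Ioo {f : ℝ → ℝ} {a m b : ℝ}
    (hf : IntervalIntegrable f volume a b) (hm : m ∈ Set.Ioo a b)
    (h_left : ∀ x ∈ Set.Ioo a m, 0 < f x) (h_right : ∀ x ∈ Set.Ioo m b, 0 < f x) :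
    0 < ∫ x in a..b, f x := by
  have hm' : m ∈ Set.uIcc a b := Set.Icc_subset_uIcc (Set.Ioo_subset_Icc_self hm)
  have hf_left : IntervalIntegrable f volume a m := hf.mono_set (Set.uIcc_subset_uIcc_left hm')
  have hf_right : IntervalIntegrable f volume m b := hf.mono_set (Set.uIcc_subset_uIcc_right hm')
  rw [← intervalIntegral.integral_add_adjacent_intervals hf_left hf_right]
  exact add_pos (intervalIntegral.intervalIntegral_pos_of_pos_on hf_left h_left hm.1)
    (intervalIntegral.intervalIntegral_pos_of_pos_on hf_right h_right hm.2)

/- The weight has mean zero, so the midpoint value of `h` may be subtracted from `h`; both factors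
of the integrand then change sign exactly at the midpoint. -/
lemma integral_two_mul_sub_add_mul_pos {a b : ℝ} (hab : a < b) {h : ℝ → ℝ}
    (hh : StrictMonoOn h (Set.Icc a b)) : 0 < ∫ x in a..b, (2 * x - (a + b)) * h x := by
  set m := (a + b) / 2 with hm_def
  have hm : m ∈ Set.Ioo a b := ⟨by linarith, by linarith⟩
  have hm' : m ∈ Set.Icc a b := Set.Ioo_subset_Icc_self hm
  have hh_int : IntervalIntegrable h volume a b :=
    MonotoneOn.intervalIntegrable (by rw [Set.uIcc_of_le hab.le]; exact hh.monotoneOn)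
  have h_centered : 0 < ∫ x in a..b, (2 * x - (a + b)) * (h x - h m) := by
    refine integral_pos_of_pos_on_Ioo_of_pos_on_Ioo
      ((hh_int.sub intervalIntegrable_const).continuousOn_mul (by fun_prop)) hm
      (fun x hx => ?_) (fun x hx => ?_)
    · exact mul_pos_of_neg_of_neg (by linarith [hx.2])
        (sub_neg.2 (hh ⟨hx.1.le, hx.2.le.trans hm'.2⟩ hm' hx.2))
    · exact mul_pos (by linarith [hx.1])
        (sub_pos.2 (hh hm' ⟨hm'.1.trans hx.1.le, hx.2.le⟩ hx.1))
  calc 0 < ∫ x in a..b, (2 * x - (a + b)) * (h x - h m) := h_centered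
    _ = (∫ x in a..b, (2 * x - (a + b)) * h x) - ∫ x in a..b, (2 * x - (a + b)) * h m := by
        simp only [mul_sub _ (h _)]
        exact intervalIntegral.integral_sub (hh_int.continuousOn_mul (by fun_prop))
          (intervalIntegrable_const.continuousOn_mul (by fun_prop))
    _ = ∫ x in a..b, (2 * x - (a + b)) * h x := by
        rw [intervalIntegral.integral_mul_const, integral_two_mul_sub_add, zero_mul, sub_zero]

/-- The first moment `∫_a^b (2x - (a + b)) K(s - x) dx`, about the midpoint of `[a, b]` and up to a
factor `2`, of the kernel `K` seen from `s`. For `K(y) = y^{-α}` and `[a, b] = [t_{j-1}, t_j]` it is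
`c_j^k` at `s = t_k^*`, up to a factor independent of `k`. -/
noncomputable def kernelMoment (K : ℝ → ℝ) (a b s : ℝ) : ℝ :=
  ∫ x in a..b, (2 * x - (a + b)) * K (s - x)

lemma intervalIntegrable_two_mul_sub_add_mul_comp_sub {K : ℝ → ℝ}
    (hK : ContinuousOn K (Set.Ioi 0)) {a b s : ℝ} (hab : a ≤ b) (hbs : b < s) :
    IntervalIntegrable (fun x => (2 * x - (a + b)) * K (s - x)) volume a b := by
  refine ContinuousOn.intervalIntegrable_of_Icc hab (ContinuousOn.mul (by fun_prop) ?_)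
  exact hK.comp (by fun_prop) fun x hx => sub_pos.2 (hx.2.trans_lt hbs)

lemma kernelMoment_strictAntiOn {K : ℝ → ℝ} (hK : StrictConvexOn ℝ (Set.Ioi 0) K) {a b : ℝ}
    (hab : a < b) : StrictAntiOn (kernelMoment K a b) (Set.Ioi b) := by
  intro s hs s' hs' hss'
  have h_mono : StrictMonoOn (fun x => K (s - x) - K (s' - x)) (Set.Icc a b) := by
    intro x hx y hy hxy
    have h_incr := add_sub_lt_add_sub_of_strictConvexOn hK (x := s - y) (y := s - x) (d := s' - s)
      (sub_pos.2 (hy.2.trans_lt hs)) (by simpa using hx.2.trans_lt hs')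
      (sub_lt_sub_left hxy s) (sub_pos.2 hss')
    simp only [sub_add_sub_cancel'] at h_incr ⊢
    linarith
  have hK_cont : ContinuousOn K (Set.Ioi 0) := hK.convexOn.continuousOn isOpen_Ioi
  have h_pos := integral_two_mul_sub_add_mul_pos hab h_mono
  simp only [mul_sub _ (K _)] at h_pos
  rw [intervalIntegral.integral_sub
    (intervalIntegrable_two_mul_sub_add_mul_comp_sub hK_cont hab.le hs)
    (intervalIntegrable_two_mul_sub_add_mul_comp_sub hK_cont hab.le hs')] at h_pos
  exact sub_pos.1 h_pos

lemma ccoef_eq_kernelMoment (α : ℝ) (t : ℕ → ℝ) (j k : ℕ) :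
    ccoef α t j k = (tau t (j + 1) * (tau t j + tau t (j + 1)))⁻¹ *
      kernelMoment (fun x => (x ^ α)⁻¹) (t (j - 1)) (t j) (tstar α t k) := by
  have h_subst := intervalIntegral.mul_integral_comp_add_mul (a := 0) (b := 1) (c := tau t j)
    (d := t (j - 1)) (f := fun x => (2 * x - (t (j - 1) + t j)) * ((tstar α t k - x) ^ α)⁻¹)
  have h_end : t (j - 1) + tau t j * 1 = t j := by rw [tau]; ring
  rw [mul_zero, add_zero, h_end] at h_subst
  rw [kernelMoment, ← h_subst, ← intervalIntegral.integral_const_mul,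
    ← intervalIntegral.integral_const_mul, ccoef]
  congr 1 with θ
  have h_weight : 2 * (t (j - 1) + tau t j * θ) - (t (j - 1) + t j) = tau t j * (2 * θ - 1) := by
    rw [tau]; ring
  rw [h_weight, mul_comm (tau t j) θ, div_eq_mul_inv, mul_inv _ (_ ^ α)]
  ring

lemma tau_pos {t : ℕ → ℝ} (ht : StrictMono t) {j : ℕ} (hj : 1 ≤ j) : 0 < tau t j :=
  sub_pos.2 (ht (by omega))

lemma tstar_mem_Ioo {α : ℝ} (hα : α ∈ Set.Ioo 0 2) {t : ℕ → ℝ} (ht : StrictMono t) {k : ℕ}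
    (hk : 1 ≤ k) : tstar α t k ∈ Set.Ioo (t (k - 1)) (t k) := by
  have hτ := tau_pos ht hk
  refine ⟨lt_add_of_pos_right _ (mul_pos (by linarith [hα.2]) hτ), ?_⟩
  calc tstar α t k < t (k - 1) + tau t k :=
        add_lt_add_right (mul_lt_of_lt_one_left hτ (by linarith [hα.1])) _
    _ = t k := add_sub_cancel _ _

lemma lt_tstar {α : ℝ} (hα : α ∈ Set.Ioo 0 2) {t : ℕ → ℝ} (ht : StrictMono t) {j k : ℕ}
    (hjk : j < k) : t j < tstar α t k :=
  (ht.monotone (Nat.le_sub_one_of_lt hjk)).trans_lt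
    (tstar_mem_Ioo hα ht (Nat.one_le_of_lt hjk)).1

lemma tstar_strictMonoOn {α : ℝ} (hα : α ∈ Set.Ioo 0 2) {t : ℕ → ℝ} (ht : StrictMono t) :
    StrictMonoOn (tstar α t) (Set.Ici 1) := fun _ hk _ _ hkl =>
  (tstar_mem_Ioo hα ht hk).2.trans (lt_tstar hα ht hkl)

theorem ccoef_diff_k_neg_general {α : ℝ} (hα : α ∈ Set.Ioo 0 2) {t : ℕ → ℝ} (ht : StrictMono t)
    {j : ℕ} (hj : 1 ≤ j) : StrictAntiOn (ccoef α t j) (Set.Ioi j) := by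
  intro k hk l hl hkl
  have h_const : 0 < (tau t (j + 1) * (tau t j + tau t (j + 1)))⁻¹ := by
    have hτ := tau_pos ht hj
    have hτ' := tau_pos ht (Nat.le_add_left 1 j)
    positivity
  have h_tstar : tstar α t k < tstar α t l :=
    tstar_strictMonoOn hα ht (Nat.one_le_of_lt hk) (Nat.one_le_of_lt hl) hkl
  rw [ccoef_eq_kernelMoment, ccoef_eq_kernelMoment]
  exact mul_lt_mul_of_pos_left (kernelMoment_strictAntiOn (strictConvexOn_inv_rpow hα.1)
    (ht (Nat.sub_one_lt_of_lt hj)) (lt_tstar hα ht hk) (lt_tstar hα ht hl) h_tstar) h_const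

/-- (P6): `c_j^{k+1} - c_j^k < 0` for `k ≥ 2`, `1 ≤ j ≤ k-1`. -/
theorem ccoef_diff_k_neg (α : ℝ) (hα : α ∈ Set.Ioo (0:ℝ) 1)
    (t : ℕ → ℝ) (ht0 : t 0 = 0) (hmono : StrictMono t)
    (k j : ℕ) (hk : 2 ≤ k) (hj1 : 1 ≤ j) (hj2 : j ≤ k - 1) :
    ccoef α t j (k + 1) - ccoef α t j k < 0 :=
  sub_neg.2 (ccoef_diff_k_neg_general ⟨hα.1, hα.2.trans one_lt_two⟩ hmono hj1
    (Set.mem_Ioi.2 (by omega)) (Set.mem_Ioi.2 (by omega)) k.lt_succ_self)
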